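/- Assume S is a proper family. Then every facet F of conv(X^{l,u}) is defined by some inequality ᾱ·z + β̄·δ ≤ γ̄, i.e., the inequality is valid for X^{l,u} and F = {(z,δ) ∈ conv(X^{l,u}) : ᾱ·z + β̄·δ = γ̄}, in which there exists κ ∈ R with ᾱ_j ∈ {0, κ} for every j ∈ J. -/

import Mathlib

open Finset

noncomputable section

def Xset (n m l u : ℕ) (S : Fin m → Finset (Fin n)) : Set ((Fin n → ℝ) × (Fin m → ℝ)) :=
  {zd | (∀ j, zd.1 j = 0 ∨ zd.1 j = 1) ∧ (∀ i, zd.2 i = 0 ∨ zd.2 i = 1) ∧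
        (∀ i, zd.2 i = ∏ j ∈ S i, (1 - zd.1 j)) ∧
        (l : ℝ) ≤ ∑ j, zd.1 j ∧ ∑ j, zd.1 j ≤ (u : ℝ)}

def Dset (n m l u : ℕ) (S : Fin m → Finset (Fin n)) : Set (Fin m → ℝ) :=
  Prod.snd '' Xset n m l u S

def Xfiber (n m l u : ℕ) (S : Fin m → Finset (Fin n)) (δ : Fin m → ℝ) :
    Set (Fin n → ℝ) :=
  {z | (z, δ) ∈ Xset n m l u S}

/-- The family is closed under nonempty intersection. -/
def ClosedInter (n m : ℕ) (S : Fin m → Finset (Fin n)) : Prop :=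
  ∀ i j : Fin m, (S i ∩ S j).Nonempty → ∃ k, S i ∩ S j = S k

/-- The family is proper. -/
def ProperFam (n m l u : ℕ) (S : Fin m → Finset (Fin n)) : Prop :=
  ClosedInter n m S ∧
  ∃ D : Finset (Fin m → ℝ), (D : Set (Fin m → ℝ)) = Dset n m l u S ∧ D.card = m + 1 ∧
    AffineIndependent ℝ (Subtype.val : {x : Fin m → ℝ // x ∈ D} → (Fin m → ℝ))

/-- `f x ≤ c` is valid and defines a facet of `conv P`. -/
def IsFacet {E : Type*} [AddCommGroup E] [Module ℝ E] (P : Set E) (f : E → ℝ) (c : ℝ) :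
    Prop :=
  (∀ x ∈ P, f x ≤ c) ∧
  Module.finrank ℝ (affineSpan ℝ {x ∈ convexHull ℝ P | f x = c}).direction + 1 =
    Module.finrank ℝ (affineSpan ℝ P).direction

def SS (n m : ℕ) (S : Fin m → Finset (Fin n)) : ℕ → Finset (Fin n) :=
  fun k => if h : 1 ≤ k ∧ k ≤ m then S ⟨k - 1, by omega⟩ else if k = 0 then ∅ else Finset.univ

def dd (m : ℕ) (δ : Fin m → ℝ) : ℕ → ℝ :=
  fun k => if h : 1 ≤ k ∧ k ≤ m then δ ⟨k - 1, by omega⟩ else if k = 0 then 1 else 0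

def mixLeLHS (n m u : ℕ) (S : Fin m → Finset (Fin n)) (p : ℕ) (S' : Finset (Fin n))
    (zd : (Fin n → ℝ) × (Fin m → ℝ)) : ℝ :=
  ∑ j ∈ S', zd.1 j + ((u : ℝ) - ((S' \ SS n m S p).card : ℝ)) * dd m zd.2 p
    + ∑ i ∈ Finset.Icc (p + 1) m,
        (((S' \ SS n m S (i - 1)).card : ℝ) - ((S' \ SS n m S i).card : ℝ)) * dd m zd.2 i

def MixLe (n m u : ℕ) (S : Fin m → Finset (Fin n)) (p : ℕ) (S' : Finset (Fin n))
    (zd : (Fin n → ℝ) × (Fin m → ℝ)) : Prop :=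
  mixLeLHS n m u S p S' zd ≤ (u : ℝ)

def mixGeLHS (n m l : ℕ) (S : Fin m → Finset (Fin n)) (p : ℕ) (S' : Finset (Fin n))
    (zd : (Fin n → ℝ) × (Fin m → ℝ)) : ℝ :=
  (((S' ∪ SS n m S p).card : ℝ) - (n : ℝ) + (l : ℝ)) * dd m zd.2 p
    + ∑ i ∈ Finset.Icc (p + 1) m,
        (((S' ∪ SS n m S i).card : ℝ) - ((S' ∪ SS n m S (i - 1)).card : ℝ)) * dd m zd.2 i
    - ∑ j ∈ S', zd.1 j

def MixGe (n m l : ℕ) (S : Fin m → Finset (Fin n)) (p : ℕ) (S' : Finset (Fin n))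
    (zd : (Fin n → ℝ) × (Fin m → ℝ)) : Prop :=
  mixGeLHS n m l S p S' zd ≤ 0

def NestedLin (n m l u : ℕ) (S : Fin m → Finset (Fin n))
    (zd : (Fin n → ℝ) × (Fin m → ℝ)) : Prop :=
  ((l : ℝ) ≤ ∑ j, zd.1 j) ∧ (∑ j, zd.1 j ≤ (u : ℝ)) ∧
  (∀ i : Fin m, ∀ j ∈ S i, zd.1 j + zd.2 i ≤ 1) ∧
  (1 ≤ dd m zd.2 1 + ∑ j ∈ SS n m S 1, zd.1 j) ∧
  (0 ≤ dd m zd.2 m) ∧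
  (∀ j, 0 ≤ zd.1 j) ∧
  (∀ j, j ∉ SS n m S m → zd.1 j ≤ 1) ∧
  (∀ i : ℕ, 1 ≤ i → i + 1 ≤ m → dd m zd.2 (i + 1) ≤ dd m zd.2 i) ∧
  (∀ i : ℕ, 1 ≤ i → i + 1 ≤ m →
    dd m zd.2 i - dd m zd.2 (i + 1) ≤ ∑ j ∈ SS n m S (i + 1) \ SS n m S i, zd.1 j)

def FollowsPattern (n : ℕ) (α α' : Fin n → ℝ) : Prop :=
  (∀ j, (0 ≤ α j → 0 ≤ α' j) ∧ (α j ≤ 0 → α' j ≤ 0)) ∧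
  (∀ j₁ j₂ : Fin n, α j₂ ≤ α j₁ → α' j₂ ≤ α' j₁)

def IsFacetSet {E : Type*} [AddCommGroup E] [Module ℝ E] (P : Set E) (F : Set E) : Prop :=
  ∃ (f : E →ₗ[ℝ] ℝ) (c : ℝ), (∀ x ∈ P, f x ≤ c) ∧
    F = {x ∈ convexHull ℝ P | f x = c} ∧
    Module.finrank ℝ (affineSpan ℝ F).direction + 1 =
      Module.finrank ℝ (affineSpan ℝ P).direction

/-! Over a fixed `δ`, the supports of the points of `X^{l,u}` form a family with a symmetric
exchange property, because `S` is closed under nonempty intersection. Hence a maximizer of a weight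
vector `α` over such a fibre also maximizes `φ ∘ α` for every monotone `φ` fixing `0`: at each
exchange only the order of the weights and their signs matter. Since the vectors `δ` are affinely
independent, any function on them is affine, so that if `α` has two distinct nonzero values, cutting
`α = φ ∘ α + ψ ∘ α` at a middle level splits a valid inequality into a sum of two valid ones, each
with fewer levels. A facet is defined by one of the summands, and descent on the number of levels
ends with `{0, κ}`. -/

section Exchange

variable {α : Type*}

theorem sum_comp_le_sum_comp_of_card_le_one {M N : Type*} [AddCommMonoid M] [Preorder M]
    [AddCommMonoid N] [Preorder N] {φ : M → N} (hφ : Monotone φ) (hφ0 : φ 0 = 0) {a : α → M}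
    {I J : Finset α} (hI : #I ≤ 1) (hJ : #J ≤ 1) (h : ∑ j ∈ J, a j ≤ ∑ i ∈ I, a i) :
    ∑ j ∈ J, φ (a j) ≤ ∑ i ∈ I, φ (a i) := by
  have comp_sum : ∀ K : Finset α, #K ≤ 1 → ∑ k ∈ K, φ (a k) = φ (∑ k ∈ K, a k) := by
    intro K hK
    rcases Nat.le_one_iff_eq_zero_or_eq_one.1 hK with hK | hK
    · simp [card_eq_zero.1 hK, hφ0]
    · obtain ⟨k, rfl⟩ := card_eq_one.1 hK
      simp
  rw [comp_sum I hI, comp_sum J hJ]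
  exact hφ h

variable [DecidableEq α]

theorem sum_sdiff_union {M : Type*} [AddCommGroup M] {Z I J : Finset α} (hI : I ⊆ Z)
    (hJ : Disjoint Z J) (f : α → M) :
    ∑ j ∈ (Z \ I) ∪ J, f j = ∑ j ∈ Z, f j - ∑ j ∈ I, f j + ∑ j ∈ J, f j := by
  rw [sum_union (hJ.mono_left sdiff_subset), sum_sdiff_eq_sub hI]

/-- A weak form of the symmetric exchange property of generalized matroids: two distinct members
come closer by moving at most one element of `Z \ W` from `Z` to `W` and at most one element of
`W \ Z` from `W` to `Z`. The sets `I` and `J` hold the moved elements. -/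
def IsExchangeFamily (𝓕 : Set (Finset α)) : Prop :=
  ∀ Z ∈ 𝓕, ∀ W ∈ 𝓕, Z ≠ W → ∃ I ⊆ Z \ W, ∃ J ⊆ W \ Z, #I ≤ 1 ∧ #J ≤ 1 ∧ (I ∪ J).Nonempty ∧
    (Z \ I) ∪ J ∈ 𝓕 ∧ (W \ J) ∪ I ∈ 𝓕

theorem symmDiff_exchange_ssubset {Z W I J : Finset α} (hI : I ⊆ Z \ W) (hJ : J ⊆ W \ Z)
    (hIJ : (I ∪ J).Nonempty) : symmDiff Z ((W \ J) ∪ I) ⊂ symmDiff Z W := by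
  obtain ⟨x, hx⟩ := hIJ
  refine ssubset_iff_of_subset (fun y => ?_) |>.2 ⟨x, ?_, ?_⟩ <;>
    grind [mem_symmDiff]

theorem IsExchangeFamily.isMaxOn_sum_comp {M N : Type*} [AddCommGroup M] [PartialOrder M]
    [IsOrderedAddMonoid M] [AddCommGroup N] [PartialOrder N] [IsOrderedAddMonoid N]
    {𝓕 : Set (Finset α)} (h𝓕 : IsExchangeFamily 𝓕) {φ : M → N} (hφ : Monotone φ) (hφ0 : φ 0 = 0)
    {a : α → M} {Z : Finset α} (hZ : Z ∈ 𝓕) (hmax : IsMaxOn (fun W => ∑ j ∈ W, a j) 𝓕 Z) :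
    IsMaxOn (fun W => ∑ j ∈ W, φ (a j)) 𝓕 Z := by
  rw [isMaxOn_iff] at hmax ⊢
  intro W hW
  induction hd : symmDiff Z W using Finset.strongInduction generalizing W with
  | H D ih =>
    subst hd
    rcases eq_or_ne Z W with rfl | hne
    · exact le_rfl
    obtain ⟨I, hI, J, hJ, hI1, hJ1, hIJ, hZ', hW'⟩ := h𝓕 Z hZ W hW hne
    obtain ⟨hIZ, hIW⟩ := subset_sdiff.1 hI
    obtain ⟨hJW, hJZ⟩ := subset_sdiff.1 hJ
    have hle : ∑ j ∈ J, a j ≤ ∑ i ∈ I, a i := by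
      have := hmax _ hZ'
      rwa [sum_sdiff_union hIZ hJZ.symm, sub_add, sub_le_self_iff, sub_nonneg] at this
    calc ∑ j ∈ W, φ (a j)
        ≤ ∑ j ∈ W, φ (a j) + (∑ i ∈ I, φ (a i) - ∑ j ∈ J, φ (a j)) :=
          le_add_of_nonneg_right
            (sub_nonneg.2 (sum_comp_le_sum_comp_of_card_le_one hφ hφ0 hI1 hJ1 hle))
      _ = ∑ j ∈ (W \ J) ∪ I, φ (a j) := by rw [sum_sdiff_union hJW hIW.symm]; abel
      _ ≤ ∑ j ∈ Z, φ (a j) := ih _ (symmDiff_exchange_ssubset hI hJ hIJ) _ hW' rfl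

end Exchange

section MissFamily

variable {α ι : Type*}

/-- The sets with between `l` and `u` elements that miss exactly the members `S i`, `i ∈ A`, of the
family `S`: these are the supports of the points of `Xset` with a prescribed `δ`. -/
def missFamily (S : ι → Finset α) (A : Set ι) (l u : ℕ) : Set (Finset α) :=
  {Z | (∀ i, Disjoint (S i) Z ↔ i ∈ A) ∧ l ≤ #Z ∧ #Z ≤ u}

variable {S : ι → Finset α} {A : Set ι} {l u : ℕ} {Z W : Finset α}

theorem ordConnected_missFamily : (missFamily S A l u).OrdConnected := by
  refine ⟨fun Z hZ W hW V ⟨hZV, hVW⟩ => ⟨fun i => ⟨fun h => ?_, fun h => ?_⟩, ?_, ?_⟩⟩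
  · exact (hZ.1 i).1 (h.mono_right hZV)
  · exact ((hW.1 i).2 h).mono_right hVW
  · exact hZ.2.1.trans (card_le_card hZV)
  · exact (card_le_card hVW).trans hW.2.2

theorem exists_mem_inter_of_mem_missFamily (hZ : Z ∈ missFamily S A l u) {k : ι} (hk : k ∉ A) :
    ∃ x ∈ S k, x ∈ Z :=
  not_disjoint_iff.1 fun h => hk ((hZ.1 k).1 h)

theorem notMem_of_mem_of_mem_missFamily (hZ : Z ∈ missFamily S A l u) {k : ι} {x : α}
    (hxk : x ∈ S k) (hxZ : x ∈ Z) : k ∉ A :=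
  fun hk => disjoint_left.1 ((hZ.1 k).2 hk) hxk hxZ

variable [DecidableEq α]

theorem swap_mem_missFamily (hZ : Z ∈ missFamily S A l u) (hW : W ∈ missFamily S A l u) {i j : α}
    (hi : i ∈ Z) (hjW : j ∈ W) (hjZ : j ∉ Z) (hcrit : ∀ k, S k ∩ Z = {i} → j ∈ S k) :
    (Z \ {i}) ∪ {j} ∈ missFamily S A l u := by
  have hcard : #((Z \ {i}) ∪ {j}) = #Z := by
    rw [card_union_of_disjoint (by simp [hjZ]), card_singleton, sdiff_singleton_eq_erase,
      card_erase_add_one hi]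
  refine ⟨fun k => ⟨fun hdisj => ?_, fun hk => ?_⟩, hcard ▸ hZ.2⟩
  · by_contra hk
    obtain ⟨x, hxk, hxZ⟩ := exists_mem_inter_of_mem_missFamily hZ hk
    grind [disjoint_left]
  · have hkZ := (hZ.1 k).2 hk
    have hjk : j ∉ S k := fun h => notMem_of_mem_of_mem_missFamily hW h hjW hk
    exact disjoint_union_right.2
      ⟨hkZ.mono_right sdiff_subset, disjoint_singleton_right.2 hjk⟩

theorem exists_swap_of_inter_eq_singleton
    (hS : ∀ i j, (S i ∩ S j).Nonempty → ∃ k, S i ∩ S j = S k)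
    (hZ : Z ∈ missFamily S A l u) (hW : W ∈ missFamily S A l u) {i : α} (hiW : i ∉ W)
    (hcrit : ∃ k, S k ∩ Z = {i}) :
    ∃ j ∈ W \ Z, (Z \ {i}) ∪ {j} ∈ missFamily S A l u ∧
      (W \ {j}) ∪ {i} ∈ missFamily S A l u := by
  obtain ⟨k, hk, hmin⟩ := exists_minimalFor_of_wellFoundedLT _ S hcrit
  have mem_of_crit : ∀ {p V x}, S p ∩ V = {x} → x ∈ S p ∧ x ∈ V := fun h =>
    mem_inter.1 (h ▸ mem_singleton_self _)
  have eq_of_mem : ∀ {x}, x ∈ S k → x ∈ Z → x = i := fun hxk hxZ =>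
    mem_singleton.1 (hk ▸ mem_inter.2 ⟨hxk, hxZ⟩)
  obtain ⟨hik, hiZ⟩ := mem_of_crit hk
  obtain ⟨j, hjk, hjW⟩ := exists_mem_inter_of_mem_missFamily hW
    (notMem_of_mem_of_mem_missFamily hZ hik hiZ)
  have hjZ : j ∉ Z := fun h => hiW (eq_of_mem hjk h ▸ hjW)
  refine ⟨j, mem_sdiff.2 ⟨hjW, hjZ⟩, swap_mem_missFamily hZ hW hiZ hjW hjZ fun p hp => ?_,
    swap_mem_missFamily hW hZ hjW hiZ hiW fun p hp => ?_⟩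
  · -- By minimality of `S k`, it is contained in every `S p` that meets `Z` in `i` alone.
    obtain ⟨r, hr⟩ := hS k p ⟨i, mem_inter.2 ⟨hik, (mem_of_crit hp).1⟩⟩
    have hrZ : S r ∩ Z = {i} := by rw [← hr, inter_assoc, hp, inter_singleton_of_mem hik]
    exact inter_subset_right (hr ▸ hmin hrZ (hr ▸ inter_subset_left) hjk)
  · -- `S k ∩ S p` meets `W`, hence also `Z`, and it can do so only in `i`.
    have hjp := mem_inter.2 ⟨hjk, (mem_of_crit hp).1⟩
    obtain ⟨r, hr⟩ := hS k p ⟨j, hjp⟩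
    obtain ⟨x, hxr, hxZ⟩ := exists_mem_inter_of_mem_missFamily hZ
      (notMem_of_mem_of_mem_missFamily hW (hr ▸ hjp) hjW)
    obtain ⟨hxk, hxp⟩ := mem_inter.1 (hr ▸ hxr)
    exact eq_of_mem hxk hxZ ▸ hxp

theorem exists_swap_mem_missFamily
    (hS : ∀ i j, (S i ∩ S j).Nonempty → ∃ k, S i ∩ S j = S k)
    (hZ : Z ∈ missFamily S A l u) (hW : W ∈ missFamily S A l u) (hZW : ¬ Z ⊆ W) (hWZ : ¬ W ⊆ Z) :
    ∃ i ∈ Z \ W, ∃ j ∈ W \ Z, (Z \ {i}) ∪ {j} ∈ missFamily S A l u ∧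
      (W \ {j}) ∪ {i} ∈ missFamily S A l u := by
  obtain ⟨i, hiZ, hiW⟩ := not_subset.1 hZW
  obtain ⟨j, hjW, hjZ⟩ := not_subset.1 hWZ
  by_cases hi : ∃ k, S k ∩ Z = {i}
  · exact ⟨i, mem_sdiff.2 ⟨hiZ, hiW⟩, exists_swap_of_inter_eq_singleton hS hZ hW hiW hi⟩
  by_cases hj : ∃ k, S k ∩ W = {j}
  · obtain ⟨i', hi', hW', hZ'⟩ := exists_swap_of_inter_eq_singleton hS hW hZ hjZ hj
    exact ⟨i', hi', j, mem_sdiff.2 ⟨hjW, hjZ⟩, hZ', hW'⟩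
  exact ⟨i, mem_sdiff.2 ⟨hiZ, hiW⟩, j, mem_sdiff.2 ⟨hjW, hjZ⟩,
    swap_mem_missFamily hZ hW hiZ hjW hjZ fun k hk => (hi ⟨k, hk⟩).elim,
    swap_mem_missFamily hW hZ hjW hiZ hiW fun k hk => (hj ⟨k, hk⟩).elim⟩

theorem isExchangeFamily_missFamily (hS : ∀ i j, (S i ∩ S j).Nonempty → ∃ k, S i ∩ S j = S k) :
    IsExchangeFamily (missFamily S A l u) := by
  intro Z hZ W hW hne
  have between {X Y V : Finset α} (hX : X ∈ missFamily S A l u) (hY : Y ∈ missFamily S A l u)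
      (hXV : X ⊆ V) (hVY : V ⊆ Y) : V ∈ missFamily S A l u :=
    ordConnected_missFamily.out hX hY ⟨hXV, hVY⟩
  by_cases hZW : Z ⊆ W
  · obtain ⟨j, hjW, hjZ⟩ := exists_of_ssubset (hZW.ssubset_of_ne hne)
    exact ⟨∅, empty_subset _, {j}, by grind, by simp, by simp, by simp,
      between hZ hW (by grind) (by grind), between hZ hW (by grind) (by grind)⟩
  by_cases hWZ : W ⊆ Z
  · obtain ⟨i, hiZ, hiW⟩ := exists_of_ssubset (hWZ.ssubset_of_ne hne.symm)
    exact ⟨{i}, by grind, ∅, empty_subset _, by simp, by simp, by simp,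
      between hW hZ (by grind) (by grind), between hW hZ (by grind) (by grind)⟩
  obtain ⟨i, hi, j, hj, hZ', hW'⟩ := exists_swap_mem_missFamily hS hZ hW hZW hWZ
  exact ⟨{i}, singleton_subset_iff.2 hi, {j}, singleton_subset_iff.2 hj, by simp, by simp, by simp,
    hZ', hW'⟩

end MissFamily

section Levels

variable {ι R : Type*} [Fintype ι]

theorem exists_lt_lt_of_two_lt_card [LinearOrder R] {s : Finset R} (hs : 2 < #s) :
    ∃ p ∈ s, ∃ q ∈ s, ∃ r ∈ s, p < q ∧ q < r := by
  let e := s.orderEmbOfFin rfl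
  exact ⟨e ⟨0, by omega⟩, s.orderEmbOfFin_mem rfl _, e ⟨1, by omega⟩, s.orderEmbOfFin_mem rfl _,
    e ⟨2, hs⟩, s.orderEmbOfFin_mem rfl _, e.strictMono (by simp), e.strictMono (by simp)⟩

theorem card_image_lt_of_map_eq {R' : Type*} [DecidableEq R'] {s : Finset R} {f : R → R'} {x y : R}
    (hx : x ∈ s) (hy : y ∈ s) (hxy : x ≠ y) (h : f x = f y) : #(s.image f) < #s :=
  card_image_le.lt_of_ne fun hcard => hxy (card_image_iff.1 hcard hx hy h)

/-- The values of the weights `a` together with `0`. Their number measures how far `a` is from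
taking a single nonzero value. -/
def levels [Zero R] [DecidableEq R] (a : ι → R) : Finset R := insert 0 (univ.image a)

theorem levels_comp [Zero R] [DecidableEq R] {R' : Type*} [Zero R'] [DecidableEq R'] (a : ι → R)
    {φ : R → R'} (hφ0 : φ 0 = 0) : levels (φ ∘ a) = (levels a).image φ := by
  rw [levels, levels, image_insert, hφ0, image_image]

theorem exists_eq_zero_or_eq_of_card_levels_le_two [Zero R] [DecidableEq R] {a : ι → R}
    (ha : #(levels a) ≤ 2) : ∃ κ, ∀ j, a j = 0 ∨ a j = κ := by
  have h1 : #((levels a).erase 0) ≤ 1 := by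
    rw [card_erase_of_mem (show 0 ∈ levels a from mem_insert_self _ _)]
    omega
  obtain ⟨κ, hκ⟩ := card_le_one_iff_subset_singleton.1 h1
  refine ⟨κ, fun j => or_iff_not_imp_left.2 fun hj => mem_singleton.1 (hκ ?_)⟩
  exact mem_erase.2 ⟨hj, mem_insert_of_mem (mem_image_of_mem a (mem_univ j))⟩

variable [AddCommGroup R] [LinearOrder R] [IsOrderedAddMonoid R]

theorem exists_monotone_add_eq_of_two_lt_card_levels {a : ι → R} (ha : 2 < #(levels a)) :
    ∃ φ ψ : R → R, Monotone φ ∧ φ 0 = 0 ∧ Monotone ψ ∧ ψ 0 = 0 ∧ φ + ψ = id ∧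
      #(levels (φ ∘ a)) < #(levels a) ∧ #(levels (ψ ∘ a)) < #(levels a) := by
  -- Cutting at the middle `q` of three levels, one part identifies `q` with `r`, the other `p` with
  -- `q`; the constants subtracted only serve to fix `0`.
  obtain ⟨p, hp, q, hq, r, hr, hpq, hqr⟩ := exists_lt_lt_of_two_lt_card ha
  let φ : R → R := fun x => min x q - min 0 q
  let ψ : R → R := fun x => max x q - max 0 q
  have hφ0 : φ 0 = 0 := sub_self _
  have hψ0 : ψ 0 = 0 := sub_self _
  refine ⟨φ, ψ, ?_, hφ0, ?_, hψ0, ?_, ?_, ?_⟩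
  · exact fun x y hxy => sub_le_sub_right (min_le_min_right q hxy) _
  · exact fun x y hxy => sub_le_sub_right (max_le_max_right q hxy) _
  · ext x
    calc φ x + ψ x = (min x q + max x q) - (min 0 q + max 0 q) := by simp only [φ, ψ]; abel
      _ = x := by rw [min_add_max, min_add_max]; abel
  · rw [levels_comp a hφ0]
    exact card_image_lt_of_map_eq hq hr hqr.ne (by simp [φ, hqr.le])
  · rw [levels_comp a hψ0]
    exact card_image_lt_of_map_eq hp hq hpq.ne (by simp [ψ, hpq.le])

end Levels

section Affine

variable {k V : Type*} [DivisionRing k] [AddCommGroup V] [Module k V]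

theorem exists_linearMap_add_eq_of_affineIndependent {ι W : Type*} [AddCommGroup W] [Module k W]
    {p : ι → V} (hp : AffineIndependent k p) (w : ι → W) :
    ∃ (g : V →ₗ[k] W) (c : W), ∀ i, g (p i) + c = w i := by
  rcases isEmpty_or_nonempty ι with _ | ⟨⟨i₀⟩⟩
  · exact ⟨0, 0, isEmptyElim⟩
  have hli := (affineIndependent_iff_linearIndependent_vsub k p i₀).1 hp
  obtain ⟨L, hL⟩ := LinearMap.exists_leftInverse_of_injective _ (LinearMap.ker_eq_bot.2 hli)
  let g : V →ₗ[k] W := Finsupp.linearCombination k (fun i : {i // i ≠ i₀} => w i - w i₀) ∘ₗ L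
  have hg : ∀ i, g (p i - p i₀) = w i - w i₀ := by
    intro i
    rcases eq_or_ne i i₀ with rfl | hi
    · simp
    · have := LinearMap.congr_fun hL (Finsupp.single ⟨i, hi⟩ 1)
      simp only [LinearMap.comp_apply, Finsupp.linearCombination_single, one_smul, vsub_eq_sub,
        LinearMap.id_apply] at this
      simp [g, this]
  refine ⟨g, w i₀ - g (p i₀), fun i => ?_⟩
  rw [add_sub_left_comm, ← map_sub, hg, add_sub_cancel]

theorem affineSubspace_eq_of_le_of_lt_of_finrank {P : Type*} [AddTorsor V P]
    {A B C : AffineSubspace k P} (hA : (A : Set P).Nonempty) (hAB : A ≤ B) (hBC : B < C)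
    (hdim : Module.finrank k A.direction + 1 = Module.finrank k C.direction) : A = B := by
  have : Module.Finite k C.direction := Module.finite_of_finrank_pos (by omega)
  have hlt : B.direction < C.direction := AffineSubspace.direction_lt_of_nonempty hBC (hA.mono hAB)
  have : Module.Finite k B.direction := Submodule.finiteDimensional_of_le hlt.le
  have hBC' := Submodule.finrank_lt_finrank_of_lt hlt
  have hdir : A.direction = B.direction :=
    Submodule.eq_of_le_of_finrank_le (AffineSubspace.direction_le hAB) (by omega)
  exact AffineSubspace.eq_of_direction_eq_of_nonempty_of_le hdir hA hAB

theorem eq_of_mem_affineSpan {W : Type*} [AddCommGroup W] [Module k W] {s : Set V} {f : V →ₗ[k] W}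
    {c : W} (h : ∀ x ∈ s, f x = c) {x : V} (hx : x ∈ affineSpan k s) : f x = c :=
  AffineMap.eqOn_affineSpan (f := f.toAffineMap) (g := AffineMap.const k V c) h hx

end Affine

section Facets

variable {E : Type*} [AddCommGroup E] [Module ℝ E] {P F : Set E}

/-- The inequality `f x ≤ c` is valid for `P`, and `F` is the face of `conv P` on which it is
tight. -/
def DefinesFace (P : Set E) (f : Module.Dual ℝ E) (c : ℝ) (F : Set E) : Prop :=
  (∀ x ∈ P, f x ≤ c) ∧ F = {x ∈ convexHull ℝ P | f x = c}

theorem IsFacetSet.eq_face_of_subset (hF : IsFacetSet P F) (hne : F.Nonempty)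
    {f : Module.Dual ℝ E} {c : ℝ} (hsub : ∀ x ∈ F, f x = c) (hP : ∃ x ∈ P, f x ≠ c) :
    F = {x ∈ convexHull ℝ P | f x = c} := by
  obtain ⟨f₀, c₀, -, hF₀, hdim⟩ := hF
  obtain ⟨x₀, hx₀, hfx₀⟩ := hP
  set G := {x ∈ convexHull ℝ P | f x = c}
  have hFG : F ⊆ G := fun x hx => ⟨(hF₀ ▸ hx).1, hsub x hx⟩
  have hGP : affineSpan ℝ G < affineSpan ℝ P := by
    refine lt_of_le_of_ne ?_ fun h => ?_
    · exact affineSpan_le.2 fun x hx => convexHull_subset_affineSpan P hx.1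
    · exact hfx₀ (eq_of_mem_affineSpan (fun x hx => hx.2) (h ▸ subset_affineSpan ℝ P hx₀))
  have hspan : affineSpan ℝ F = affineSpan ℝ G :=
    affineSubspace_eq_of_le_of_lt_of_finrank (hne.mono (subset_affineSpan ℝ F))
      (affineSpan_mono ℝ hFG) hGP hdim
  refine hFG.antisymm fun x hx => hF₀ ▸ ⟨hx.1, ?_⟩
  exact eq_of_mem_affineSpan (s := F) (fun y hy => (hF₀ ▸ hy).2)
    (hspan ▸ subset_affineSpan ℝ G hx)

theorem IsFacetSet.exists_ne (hF : IsFacetSet P F) {f : Module.Dual ℝ E} {c : ℝ}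
    (hface : F = {x ∈ convexHull ℝ P | f x = c}) : ∃ x ∈ P, f x ≠ c := by
  obtain ⟨-, -, -, -, hdim⟩ := hF
  by_contra! h
  have hconv : F = convexHull ℝ P := hface.trans <| Set.sep_eq_self_iff_mem_true.2 fun x hx =>
    eq_of_mem_affineSpan h (convexHull_subset_affineSpan P hx)
  rw [hconv, affineSpan_convexHull] at hdim
  omega

theorem le_of_mem_convexHull {f : Module.Dual ℝ E} {c : ℝ} (h : ∀ x ∈ P, f x ≤ c) {x : E}
    (hx : x ∈ convexHull ℝ P) : f x ≤ c :=
  convexHull_min (t := {x | f x ≤ c}) h (convex_halfSpace_le f.isLinear c) hx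

theorem IsFacetSet.definesFace_or_of_add (hF : IsFacetSet P F) (hne : F.Nonempty)
    {f g : Module.Dual ℝ E} {c d : ℝ} (hf : ∀ x ∈ P, f x ≤ c) (hg : ∀ x ∈ P, g x ≤ d)
    (hface : F = {x ∈ convexHull ℝ P | (f + g) x = c + d}) :
    DefinesFace P f c F ∨ DefinesFace P g d F := by
  have htight : ∀ x ∈ F, f x = c ∧ g x = d := by
    intro x hx
    obtain ⟨hxP, hfg⟩ := hface ▸ hx
    have := le_of_mem_convexHull hf hxP
    have := le_of_mem_convexHull hg hxP
    rw [LinearMap.add_apply] at hfg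
    constructor <;> linarith
  obtain ⟨x, hx, hfg⟩ := hF.exists_ne hface
  by_cases hfx : f x = c
  · have hgx : g x ≠ d := fun hgx => hfg (by rw [LinearMap.add_apply, hfx, hgx])
    exact .inr ⟨hg, hF.eq_face_of_subset hne (fun y hy => (htight y hy).2) ⟨x, hx, hgx⟩⟩
  · exact .inl ⟨hf, hF.eq_face_of_subset hne (fun y hy => (htight y hy).1) ⟨x, hx, hfx⟩⟩

end Facets

section BinaryPoints

variable {ι V : Type*} [DecidableEq ι] [AddCommGroup V] [Module ℝ V]

/-- The incidence vector of a set of coordinates. -/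
def incidence (Z : Finset ι) : ι → ℝ := fun j => if j ∈ Z then 1 else 0

theorem exists_eq_incidence [Finite ι] {z : ι → ℝ} (hz : ∀ j, z j = 0 ∨ z j = 1) :
    ∃ Z, z = incidence Z := by
  refine ⟨(Set.toFinite {j | z j = 1}).toFinset, funext fun j => ?_⟩
  rcases hz j with hj | hj <;> simp [incidence, hj]

theorem prod_one_sub_incidence (T Z : Finset ι) :
    ∏ j ∈ T, (1 - incidence Z j) = if Disjoint T Z then 1 else 0 := by
  have h : ∀ j, 1 - incidence Z j = if j ∉ Z then 1 else 0 := fun j => by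
    by_cases hj : j ∈ Z <;> simp [incidence, hj]
  simp only [h, prod_ite_zero, prod_const_one, disjoint_left]

variable [Fintype ι]

theorem dotProduct_incidence (a : ι → ℝ) (Z : Finset ι) : a ⬝ᵥ incidence Z = ∑ j ∈ Z, a j := by
  simp [dotProduct, incidence]

/-- The linear functional `(z, δ) ↦ a ⬝ᵥ z + g δ`. -/
def mixedDual (a : ι → ℝ) (g : Module.Dual ℝ V) : Module.Dual ℝ ((ι → ℝ) × V) :=
  (dotProductEquiv ℝ ι a).coprod g

theorem mixedDual_apply (a : ι → ℝ) (g : Module.Dual ℝ V) (x : (ι → ℝ) × V) :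
    mixedDual a g x = a ⬝ᵥ x.1 + g x.2 := rfl

theorem mixedDual_add (a b : ι → ℝ) (g h : Module.Dual ℝ V) :
    mixedDual (a + b) (g + h) = mixedDual a g + mixedDual b h := by
  ext <;> simp [mixedDual_apply]

theorem exists_eq_mixedDual (f : Module.Dual ℝ ((ι → ℝ) × V)) : ∃ a g, f = mixedDual a g := by
  refine ⟨(dotProductEquiv ℝ ι).symm (f ∘ₗ .inl ℝ _ _), f ∘ₗ .inr ℝ _ _, ?_⟩
  rw [mixedDual, LinearEquiv.apply_symm_apply, LinearMap.coprod_comp_inl_inr]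

variable {P F : Set ((ι → ℝ) × V)}

theorem exists_valid_split (hbin : ∀ x ∈ P, ∃ Z, x.1 = incidence Z)
    (hex : ∀ δ, IsExchangeFamily {Z | (incidence Z, δ) ∈ P})
    (hΔ : AffineIndependent ℝ ((↑) : Prod.snd '' P → V)) {φ ψ : ℝ → ℝ} (hφ : Monotone φ)
    (hφ0 : φ 0 = 0) (hψ : Monotone ψ) (hψ0 : ψ 0 = 0) (hφψ : φ + ψ = id) {a : ι → ℝ}
    {g : Module.Dual ℝ V} {c : ℝ} (hvalid : ∀ x ∈ P, mixedDual a g x ≤ c) :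
    ∃ (g' : Module.Dual ℝ V) (c' : ℝ), (∀ x ∈ P, mixedDual (φ ∘ a) g' x ≤ c') ∧
      ∀ x ∈ P, mixedDual (ψ ∘ a) (g - g') x ≤ c - c' := by
  have hmax : ∀ δ : Prod.snd '' P, ∃ Z ∈ {Z | (incidence Z, (δ : V)) ∈ P},
      IsMaxOn (fun W => ∑ j ∈ W, a j) {Z | (incidence Z, (δ : V)) ∈ P} Z := by
    rintro ⟨-, ⟨z, δ⟩, hx, rfl⟩
    obtain ⟨Z, rfl : z = incidence Z⟩ := hbin _ hx
    simp only [isMaxOn_iff]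
    exact Set.exists_max_image _ (fun W => ∑ j ∈ W, a j) (Set.toFinite _) ⟨Z, hx⟩
  choose Z hZ hZmax using hmax
  -- The new right-hand side must depend on `δ` like the maximum of `φ ∘ a` over the fibre.
  obtain ⟨h, c', hh⟩ :=
    exists_linearMap_add_eq_of_affineIndependent hΔ fun δ => ∑ j ∈ Z δ, φ (a j)
  refine ⟨-h, c', ?_, ?_⟩ <;> rintro ⟨w, δ⟩ hx <;>
    obtain ⟨W, rfl : w = incidence W⟩ := hbin _ hx <;> have hδ := hh ⟨δ, _, hx, rfl⟩
  · have hW := isMaxOn_iff.1 ((hex δ).isMaxOn_sum_comp hφ hφ0 (hZ ⟨δ, _, hx, rfl⟩) (hZmax _)) W hx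
    simp only [mixedDual_apply, dotProduct_incidence, Function.comp_apply, LinearMap.neg_apply]
    linarith
  · have hW := isMaxOn_iff.1 ((hex δ).isMaxOn_sum_comp hψ hψ0 (hZ ⟨δ, _, hx, rfl⟩) (hZmax _)) W hx
    have hZc := hvalid _ (hZ ⟨δ, _, hx, rfl⟩)
    have hsum : ∑ j ∈ Z ⟨δ, _, hx, rfl⟩, φ (a j) + ∑ j ∈ Z ⟨δ, _, hx, rfl⟩, ψ (a j) =
        ∑ j ∈ Z ⟨δ, _, hx, rfl⟩, a j := by
      rw [← sum_add_distrib]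
      exact sum_congr rfl fun j _ => congrFun hφψ (a j)
    simp only [mixedDual_apply, dotProduct_incidence, Function.comp_apply, LinearMap.sub_apply,
      LinearMap.neg_apply] at hZc ⊢
    linarith

theorem IsFacetSet.exists_definesFace_two_valued (hF : IsFacetSet P F)
    (hbin : ∀ x ∈ P, ∃ Z, x.1 = incidence Z)
    (hex : ∀ δ, IsExchangeFamily {Z | (incidence Z, δ) ∈ P})
    (hΔ : AffineIndependent ℝ ((↑) : Prod.snd '' P → V)) :
    ∃ (a : ι → ℝ) (g : Module.Dual ℝ V) (c κ : ℝ),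
      DefinesFace P (mixedDual a g) c F ∧ ∀ j, a j = 0 ∨ a j = κ := by
  rcases F.eq_empty_or_nonempty with rfl | hne
  · -- For a segment `conv P`, the empty set passes the dimension test of `IsFacetSet`.
    exact ⟨0, 0, 1, 0, by simp [DefinesFace, mixedDual_apply], by simp⟩
  obtain ⟨f, c, hvalid, hface, -⟩ := id hF
  obtain ⟨a, g, rfl⟩ := exists_eq_mixedDual f
  induction hN : #(levels a) using Nat.strong_induction_on generalizing a g c with
  | h N ih =>
    subst hN
    rcases le_or_gt #(levels a) 2 with ha | ha
    · obtain ⟨κ, hκ⟩ := exists_eq_zero_or_eq_of_card_levels_le_two ha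
      exact ⟨a, g, c, κ, ⟨hvalid, hface⟩, hκ⟩
    obtain ⟨φ, ψ, hφ, hφ0, hψ, hψ0, hφψ, hφa, hψa⟩ :=
      exists_monotone_add_eq_of_two_lt_card_levels ha
    obtain ⟨g', c', hvalidφ, hvalidψ⟩ := exists_valid_split hbin hex hΔ hφ hφ0 hψ hψ0 hφψ hvalid
    have hsplit : mixedDual a g = mixedDual (φ ∘ a) g' + mixedDual (ψ ∘ a) (g - g') := by
      have hcomp : φ ∘ a + ψ ∘ a = a := funext fun j => congrFun hφψ (a j)
      rw [← mixedDual_add, hcomp, add_sub_cancel]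
    rw [hsplit, ← add_sub_cancel c' c] at hface
    rcases hF.definesFace_or_of_add hne hvalidφ hvalidψ hface with h | h
    · exact ih _ hφa _ _ _ h.1 h.2 rfl
    · exact ih _ hψa _ _ _ h.1 h.2 rfl

end BinaryPoints

section Xset

variable {n m l u : ℕ} {S : Fin m → Finset (Fin n)}

theorem incidence_mem_Xset_iff {Z : Finset (Fin n)} {δ : Fin m → ℝ} :
    (incidence Z, δ) ∈ Xset n m l u S ↔
      (∀ i, δ i = 0 ∨ δ i = 1) ∧ Z ∈ missFamily S {i | δ i = 1} l u := by
  have hbin : ∀ j, incidence Z j = 0 ∨ incidence Z j = 1 := fun j => by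
    by_cases hj : j ∈ Z <;> simp [incidence, hj]
  have hsum : ∑ j, incidence Z j = #Z := by simp [incidence]
  have hprod : ∀ i, δ i = 0 ∨ δ i = 1 →
      (δ i = ∏ j ∈ S i, (1 - incidence Z j) ↔ (Disjoint (S i) Z ↔ δ i = 1)) := fun i hi => by
    rw [prod_one_sub_incidence]
    by_cases hZ : Disjoint (S i) Z <;> rcases hi with hi | hi <;> simp [hZ, hi]
  simp only [Xset, missFamily, Set.mem_ofPred_eq, hsum, Nat.cast_le]
  constructor
  · rintro ⟨-, hδ, hδS, hcard⟩
    exact ⟨hδ, fun i => (hprod i (hδ i)).1 (hδS i), hcard⟩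
  · rintro ⟨hδ, hδS, hcard⟩
    exact ⟨hbin, hδ, fun i => (hprod i (hδ i)).2 (hδS i), hcard⟩

theorem isExchangeFamily_Xset_fibre (hS : ClosedInter n m S) (δ : Fin m → ℝ) :
    IsExchangeFamily {Z | (incidence Z, δ) ∈ Xset n m l u S} := by
  simp only [incidence_mem_Xset_iff]
  by_cases hδ : ∀ i, δ i = 0 ∨ δ i = 1
  · simpa only [hδ, implies_true, true_and] using! isExchangeFamily_missFamily hS
  · simp [IsExchangeFamily, hδ]

end Xset

theorem stmt4_general {n m l u : ℕ} {S : Fin m → Finset (Fin n)} (hS : ClosedInter n m S)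
    (hΔ : AffineIndependent ℝ ((↑) : Dset n m l u S → Fin m → ℝ))
    {F : Set ((Fin n → ℝ) × (Fin m → ℝ))} (hF : IsFacetSet (Xset n m l u S) F) :
    ∃ (αb : Fin n → ℝ) (βb : Fin m → ℝ) (γb : ℝ) (κ : ℝ),
      (∀ zd ∈ Xset n m l u S, ∑ j, αb j * zd.1 j + ∑ i, βb i * zd.2 i ≤ γb) ∧
      F = {x ∈ convexHull ℝ (Xset n m l u S) |
            ∑ j, αb j * x.1 j + ∑ i, βb i * x.2 i = γb} ∧
      (∀ j, αb j = 0 ∨ αb j = κ) := by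
  obtain ⟨a, g, c, κ, ⟨hvalid, hface⟩, hκ⟩ := hF.exists_definesFace_two_valued
    (fun x hx => exists_eq_incidence hx.1) (isExchangeFamily_Xset_fibre hS) hΔ
  obtain ⟨b, rfl⟩ := (dotProductEquiv ℝ (Fin m)).surjective g
  exact ⟨a, b, c, κ, hvalid, hface, hκ⟩

theorem stmt4 (n m l u : ℕ) (S : Fin m → Finset (Fin n))
    (hn : 0 < n) (hm : 0 < m) (hlu : l ≤ u) (hu : 2 ≤ u)
    (hdist : Function.Injective S)
    (hcard : ∀ i, 1 ≤ (S i).card ∧ (S i).card ≤ n - l)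
    (hproper : ProperFam n m l u S)
    (F : Set ((Fin n → ℝ) × (Fin m → ℝ))) (hF : IsFacetSet (Xset n m l u S) F) :
    ∃ (αb : Fin n → ℝ) (βb : Fin m → ℝ) (γb : ℝ) (κ : ℝ),
      (∀ zd ∈ Xset n m l u S, ∑ j, αb j * zd.1 j + ∑ i, βb i * zd.2 i ≤ γb) ∧
      F = {x ∈ convexHull ℝ (Xset n m l u S) |
            ∑ j, αb j * x.1 j + ∑ i, βb i * x.2 i = γb} ∧
      (∀ j, αb j = 0 ∨ αb j = κ) := by
  obtain ⟨hS, D, hD, -, hind⟩ := hproper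
  exact stmt4_general hS (hD ▸ hind) hF
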